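/- Let N be a positive squarefree integer, let P be a non-torsion integral point of E_N(ℚ), and let n ≥ 2 be an integer such that nP is integral. Then n is prime. -/

import Mathlib

/-- The congruent number curve `E_N : y² = x³ - N²x` over `ℚ`. -/
def congruentCurve (N : ℕ) : WeierstrassCurve.Affine ℚ :=
  { a₁ := 0, a₂ := 0, a₃ := 0, a₄ := -(N : ℚ) ^ 2, a₆ := 0 }

/-- A rational point on a Weierstrass curve over `ℚ` is integral if it is an affine point
whose `x`-coordinate is an integer. -/
def IsIntegralPoint {W : WeierstrassCurve.Affine ℚ} (P : W.Point) : Prop :=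
  ∃ (x y : ℚ) (h : W.Nonsingular x y),
    P = WeierstrassCurve.Affine.Point.some x y h ∧ x.den = 1

open WeierstrassCurve.Affine in
/-- x-coordinate -/
def xc {N : ℕ} : (congruentCurve N).Point → ℚ
  | .zero => 0
  | .some x _ _ => x

theorem cc_eq {N : ℕ} {x y : ℚ} (h : (congruentCurve N).Nonsingular x y) :
    y ^ 2 = x ^ 3 - (N : ℚ) ^ 2 * x := by
  have := (WeierstrassCurve.Affine.equation_iff _ _).1 h.1
  simp [congruentCurve] at this
  linarith

theorem xc_inj {N : ℕ} {P Q : (congruentCurve N).Point} (hP : P ≠ 0) (hQ : Q ≠ 0)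
    (h : xc P = xc Q) : P = Q ∨ P = -Q := by
  rcases P with _ | ⟨x, y, hp⟩
  · exact absurd rfl hP
  rcases Q with _ | ⟨x', y', hq⟩
  · exact absurd rfl hQ
  exact (WeierstrassCurve.Affine.Point.X_eq_iff (h₁ := hp) (h₂ := hq)).1 h

theorem xc_neg {N : ℕ} (P : (congruentCurve N).Point) : xc (-P) = xc P := by
  rcases P with _ | ⟨x, y, hp⟩ <;> rfl

theorem xc_addsub {N : ℕ} {P Q : (congruentCurve N).Point} (hP : P ≠ 0) (hQ : Q ≠ 0)
    (h : xc P ≠ xc Q) :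
    (xc (P + Q) + xc (P - Q)) * (xc P - xc Q) ^ 2
      = 2 * (xc P + xc Q) * (xc P * xc Q - (N : ℚ) ^ 2) ∧
    (xc (P + Q) * xc (P - Q)) * (xc P - xc Q) ^ 2 = (xc P * xc Q + (N : ℚ) ^ 2) ^ 2 := by
  rcases P with _ | ⟨x, y, hp⟩
  · exact absurd rfl hP
  rcases Q with _ | ⟨x', y', hq⟩
  · exact absurd rfl hQ
  have h : x ≠ x' := h
  have e1 := cc_eq hp
  have e2 := cc_eq hq
  rw [sub_eq_add_neg, WeierstrassCurve.Affine.Point.neg_some,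
    WeierstrassCurve.Affine.Point.add_of_X_ne h, WeierstrassCurve.Affine.Point.add_of_X_ne h]
  simp only [xc, WeierstrassCurve.Affine.addX, WeierstrassCurve.Affine.slope_of_X_ne h,
    WeierstrassCurve.Affine.negY]
  simp only [congruentCurve]
  have h' : x - x' ≠ 0 := sub_ne_zero.2 h
  constructor
  · field_simp
    linear_combination 2 * e1 + 2 * e2
  · have k1 : ((y - y') / (x - x')) ^ 2 + 0 * ((y - y') / (x - x')) - 0 - x - x' =
        (x * x' * (x + x') - (N : ℚ) ^ 2 * (x + x') - 2 * (y * y')) / (x - x') ^ 2 := by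
      field_simp
      linear_combination e1 + e2
    have k2 : ((y - (-y' - 0 * x' - 0)) / (x - x')) ^ 2 +
        0 * ((y - (-y' - 0 * x' - 0)) / (x - x')) - 0 - x - x' =
        (x * x' * (x + x') - (N : ℚ) ^ 2 * (x + x') + 2 * (y * y')) / (x - x') ^ 2 := by
      field_simp
      linear_combination e1 + e2
    rw [k1, k2]
    field_simp
    have e3 : (y * y') ^ 2 = (x ^ 3 - (N : ℚ) ^ 2 * x) * (x' ^ 3 - (N : ℚ) ^ 2 * x') := by
      rw [← e1, ← e2]; ring
    linear_combination (-4) * e3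

theorem xc_dbl {N : ℕ} {P : (congruentCurve N).Point} (hP : P + P ≠ 0) :
    0 < xc P * (xc P ^ 2 - (N : ℚ) ^ 2) ∧
    xc (P + P) * (4 * (xc P * (xc P ^ 2 - (N : ℚ) ^ 2))) = (xc P ^ 2 + (N : ℚ) ^ 2) ^ 2 ∧
    ∃ r s s' : ℚ, xc (P + P) = r ^ 2 ∧ xc (P + P) - N = s ^ 2 ∧ xc (P + P) + N = s' ^ 2 := by
  rcases P with _ | ⟨x, y, hp⟩
  · exact absurd rfl hP
  have e1 := cc_eq hp
  have hy : y ≠ (congruentCurve N).negY x y := by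
    intro h
    exact hP (WeierstrassCurve.Affine.Point.add_self_of_Y_eq h)
  have hy0 : y ≠ 0 := by
    rintro rfl
    apply hy
    simp [WeierstrassCurve.Affine.negY, congruentCurve]
  rw [WeierstrassCurve.Affine.Point.add_self_of_Y_ne hy]
  simp only [xc, WeierstrassCurve.Affine.addX, WeierstrassCurve.Affine.slope_of_Y_ne rfl hy]
  simp only [WeierstrassCurve.Affine.negY]
  simp only [congruentCurve]
  have key : ((3 * x ^ 2 + 2 * 0 * x + -(N : ℚ) ^ 2 - 0 * y) / (y - (-y - 0 * x - 0))) ^ 2 +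
      0 * ((3 * x ^ 2 + 2 * 0 * x + -(N : ℚ) ^ 2 - 0 * y) / (y - (-y - 0 * x - 0))) - 0 - x - x =
      ((x ^ 2 + (N : ℚ) ^ 2) / (2 * y)) ^ 2 := by
    have : y - (-y - 0 * x - 0) = 2 * y := by ring
    rw [this]
    field_simp
    linear_combination (-8) * x * e1
  rw [key]
  have e2 : x * (x ^ 2 - (N : ℚ) ^ 2) = y ^ 2 := by rw [e1]; ring
  refine ⟨?_, ?_, (x ^ 2 + (N : ℚ) ^ 2) / (2 * y),
    (x ^ 2 - 2 * N * x - (N : ℚ) ^ 2) / (2 * y), (x ^ 2 + 2 * N * x - (N : ℚ) ^ 2) / (2 * y), rfl, ?_, ?_⟩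
  · rw [e2]; positivity
  · rw [e2]; field_simp; ring
  · field_simp
    linear_combination (-4) * (N : ℚ) * e1
  · field_simp
    linear_combination (4) * (N : ℚ) * e1

/-- sum/product relations -/
def SP (c x1 x2 x3 x4 : ℚ) : Prop :=
  (x3 + x4) * (x1 - x2) ^ 2 = 2 * (x1 + x2) * (x1 * x2 - c ^ 2) ∧
  (x3 * x4) * (x1 - x2) ^ 2 = (x1 * x2 + c ^ 2) ^ 2

theorem prim_aux (u3 w3 u4 w4 : ℤ) (h3 : IsCoprime u3 w3) (h4 : IsCoprime u4 w4) :
    ∃ a b c : ℤ, a * (w3 * w4) + b * (u3 * w4 + u4 * w3) + c * (u3 * u4) = 1 := by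
  obtain ⟨a, b, h⟩ := h3
  obtain ⟨a', b', h'⟩ := h4
  by_contra hcon
  have hne : ¬ IsCoprime (w3 * w4) (Int.gcd (u3 * w4 + u4 * w3) (u3 * u4) : ℤ) := by
    rintro ⟨r, s, hrs⟩
    rw [Int.gcd_eq_gcd_ab] at hrs
    exact hcon ⟨r, s * Int.gcdA (u3 * w4 + u4 * w3) (u3 * u4),
      s * Int.gcdB (u3 * w4 + u4 * w3) (u3 * u4), by rw [← hrs]; ring⟩
  rw [Int.isCoprime_iff_gcd_eq_one] at hne
  obtain ⟨p, hp, hpd⟩ := Nat.exists_prime_and_dvd hne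
  have hpi : Prime (p : ℤ) := Nat.prime_iff_prime_int.1 hp
  have hd : (p : ℤ) ∣ (Int.gcd (w3 * w4) (Int.gcd (u3 * w4 + u4 * w3) (u3 * u4) : ℤ) : ℤ) := by
    exact_mod_cast hpd
  have d1 : (p : ℤ) ∣ w3 * w4 := hd.trans (Int.gcd_dvd_left ..)
  have d0 := hd.trans (Int.gcd_dvd_right ..)
  have d2 : (p : ℤ) ∣ u3 * w4 + u4 * w3 := d0.trans (Int.gcd_dvd_left ..)
  have d3 : (p : ℤ) ∣ u3 * u4 := d0.trans (Int.gcd_dvd_right ..)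
  have n3 : ¬ ((p : ℤ) ∣ u3 ∧ (p : ℤ) ∣ w3) := by
    rintro ⟨e1, e2⟩
    exact hpi.not_dvd_one (h ▸ dvd_add (e1.mul_left a) (e2.mul_left b))
  have n4 : ¬ ((p : ℤ) ∣ u4 ∧ (p : ℤ) ∣ w4) := by
    rintro ⟨e1, e2⟩
    exact hpi.not_dvd_one (h' ▸ dvd_add (e1.mul_left a') (e2.mul_left b'))
  rcases hpi.dvd_or_dvd d1 with e | e <;> rcases hpi.dvd_or_dvd d3 with f | f
  · exact n3 ⟨f, e⟩
  · have : (p : ℤ) ∣ u3 * w4 := (dvd_add_left (f.mul_right w3)).1 d2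
    rcases hpi.dvd_or_dvd this with g | g
    · exact n3 ⟨g, e⟩
    · exact n4 ⟨f, g⟩
  · have : (p : ℤ) ∣ u4 * w3 := (dvd_add_right (f.mul_right w4)).1 d2
    rcases hpi.dvd_or_dvd this with g | g
    · exact n4 ⟨g, e⟩
    · exact n3 ⟨f, g⟩
  · exact n4 ⟨f, e⟩

theorem rat_coprime (t : ℚ) : IsCoprime t.num (t.den : ℤ) := by
  rw [Int.isCoprime_iff_gcd_eq_one]
  simpa [Int.gcd] using t.reduced

theorem prim (c : ℤ) {x1 x2 x3 x4 : ℚ} (hne : x1 ≠ x2) (h : SP c x1 x2 x3 x4) :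
    ∃ e : ℤ, e ≠ 0 ∧
      (x1.num * x2.den - x2.num * x1.den) ^ 2 = e * (x3.den * x4.den) ∧
      2 * (x1.num * x2.den + x2.num * x1.den) * (x1.num * x2.num - c ^ 2 * (x1.den * x2.den))
        = e * (x3.num * x4.den + x4.num * x3.den) ∧
      (x1.num * x2.num + c ^ 2 * (x1.den * x2.den)) ^ 2 = e * (x3.num * x4.num) := by
  obtain ⟨h1, h2⟩ := h
  have k1 := Rat.num_div_den x1
  have k2 := Rat.num_div_den x2
  have k3 := Rat.num_div_den x3
  have k4 := Rat.num_div_den x4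
  have d1 : (x1.den : ℚ) ≠ 0 := by exact_mod_cast x1.den_nz
  have d2 : (x2.den : ℚ) ≠ 0 := by exact_mod_cast x2.den_nz
  have d3 : (x3.den : ℚ) ≠ 0 := by exact_mod_cast x3.den_nz
  have d4 : (x4.den : ℚ) ≠ 0 := by exact_mod_cast x4.den_nz
  obtain ⟨a, b, g, hab⟩ := prim_aux _ _ _ _ (rat_coprime x3) (rat_coprime x4)
  have d1z : (x1.den : ℤ) ≠ 0 := by exact_mod_cast x1.den_nz
  have d2z : (x2.den : ℤ) ≠ 0 := by exact_mod_cast x2.den_nz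
  have d3z : (x3.den : ℤ) ≠ 0 := by exact_mod_cast x3.den_nz
  have d4z : (x4.den : ℤ) ≠ 0 := by exact_mod_cast x4.den_nz
  have hA : (x1.num * x2.den - x2.num * x1.den : ℤ) ≠ 0 := by
    intro h0
    apply hne
    rw [← k1, ← k2, div_eq_div_iff d1 d2]
    have : (x1.num * x2.den - x2.num * x1.den : ℚ) = 0 := by exact_mod_cast h0
    linarith
  rw [← k1, ← k2, ← k3, ← k4] at h1 h2
  have q1 : (x1.num * x2.den - x2.num * x1.den : ℤ) ^ 2 * (x3.num * x4.den + x4.num * x3.den) =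
      2 * (x1.num * x2.den + x2.num * x1.den) * (x1.num * x2.num - c ^ 2 * (x1.den * x2.den)) *
        (x3.den * x4.den) := by
    field_simp at h1
    have : ((x1.num * x2.den - x2.num * x1.den) ^ 2 * (x3.num * x4.den + x4.num * x3.den) : ℚ) =
      2 * (x1.num * x2.den + x2.num * x1.den) * (x1.num * x2.num - c ^ 2 * (x1.den * x2.den)) *
        (x3.den * x4.den) := by linear_combination h1
    exact_mod_cast this
  have q2 : (x1.num * x2.den - x2.num * x1.den : ℤ) ^ 2 * (x3.num * x4.num) =
      (x1.num * x2.num + c ^ 2 * (x1.den * x2.den)) ^ 2 * (x3.den * x4.den) := by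
    field_simp at h2
    have : ((x1.num * x2.den - x2.num * x1.den) ^ 2 * (x3.num * x4.num) : ℚ) =
      (x1.num * x2.num + c ^ 2 * (x1.den * x2.den)) ^ 2 * (x3.den * x4.den) := by
      linear_combination h2
    exact_mod_cast this
  clear h1 h2 k1 k2 k3 k4
  generalize hAe : (x1.num * x2.den - x2.num * x1.den : ℤ) ^ 2 = A at *
  generalize 2 * (x1.num * x2.den + x2.num * x1.den) *
    (x1.num * x2.num - c ^ 2 * (x1.den * x2.den) : ℤ) = B at *
  generalize (x1.num * x2.num + c ^ 2 * (x1.den * x2.den) : ℤ) ^ 2 = C at *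
  have hp : (x3.den * x4.den : ℤ) ≠ 0 := mul_ne_zero d3z d4z
  have hA0 : A ≠ 0 := by rw [← hAe]; exact pow_ne_zero 2 hA
  generalize (x3.den * x4.den : ℤ) = p at *
  generalize (x3.num * x4.den + x4.num * x3.den : ℤ) = q at *
  generalize (x3.num * x4.num : ℤ) = r at *
  have hA1 : A = (a * A + b * B + g * C) * p := by
    linear_combination (-A) * hab + b * q1 + g * q2
  refine ⟨a * A + b * B + g * C, ?_, hA1, ?_, ?_⟩
  · intro h0
    rw [h0, zero_mul] at hA1
    exact hA0 hA1
  · apply mul_right_cancel₀ hp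
    linear_combination q * hA1 - q1
  · apply mul_right_cancel₀ hp
    linear_combination r * hA1 - q2

/-- The sequence of `x`-coordinates of multiples of a non-torsion point. -/
structure XSeq (N : ℕ) (X : ℤ → ℚ) : Prop where
  neg : ∀ m, X (-m) = X m
  ne : ∀ m n, m ≠ 0 → n ≠ 0 → m ≠ n → m ≠ -n → X m ≠ X n
  sp : ∀ m n, m ≠ 0 → n ≠ 0 → m ≠ n → m ≠ -n → SP N (X m) (X n) (X (m + n)) (X (m - n))
  pos : ∀ m, m ≠ 0 → 0 < X m * (X m ^ 2 - (N : ℚ) ^ 2)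
  dbl : ∀ m, m ≠ 0 → X (2 * m) * (4 * (X m * (X m ^ 2 - (N : ℚ) ^ 2))) =
    (X m ^ 2 + (N : ℚ) ^ 2) ^ 2

theorem den_sp {N : ℕ} {x1 x2 x3 x4 : ℚ} (hne : x1 ≠ x2) (h : SP N x1 x2 x3 x4) {p : ℕ}
    (hp : p.Prime) (h1 : p ∣ x1.den) (h2 : p ∣ x2.den) : p ∣ x3.den := by
  obtain ⟨e, -, hA, hB, hC⟩ := prim (N : ℤ) hne (by simpa using h)
  have hpi : Prime (p : ℤ) := Nat.prime_iff_prime_int.1 hp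
  have nd : ∀ t : ℚ, (p : ℤ) ∣ t.den → ¬ (p : ℤ) ∣ t.num := by
    intro t e1 e2
    obtain ⟨a, b, h⟩ := rat_coprime t
    exact hpi.not_dvd_one (h ▸ dvd_add (e2.mul_left a) (e1.mul_left b))
  have h1' : (p : ℤ) ∣ x1.den := by exact_mod_cast h1
  have h2' : (p : ℤ) ∣ x2.den := by exact_mod_cast h2
  have n1 := nd _ h1'
  have n2 := nd _ h2'
  have nC : ¬ (p : ℤ) ∣ e * (x3.num * x4.num) := by
    rw [← hC]
    intro hd
    have := hpi.dvd_of_dvd_pow hd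
    rw [dvd_add_left ((h1'.mul_right _).mul_left _)] at this
    exact (hpi.dvd_or_dvd this).elim n1 n2
  have ne : ¬ (p : ℤ) ∣ e := fun h => nC (h.mul_right _)
  have ne4 : ¬ (p : ℤ) ∣ x4.num := fun h => nC ((h.mul_left _).mul_left _)
  have eA : (p : ℤ) ∣ x3.den * x4.den := by
    have : (p : ℤ) ∣ e * (x3.den * x4.den) := by
      rw [← hA, sq]
      exact (dvd_sub (h2'.mul_left _) (h1'.mul_left _)).mul_right _
    exact (hpi.dvd_or_dvd this).resolve_left ne
  have eB : (p : ℤ) ∣ x3.num * x4.den + x4.num * x3.den := by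
    have : (p : ℤ) ∣ e * (x3.num * x4.den + x4.num * x3.den) := by
      rw [← hB]
      exact ((dvd_add (h2'.mul_left _) (h1'.mul_left _)).mul_left _).mul_right _
    exact (hpi.dvd_or_dvd this).resolve_left ne
  rcases hpi.dvd_or_dvd eA with f | f
  · exact_mod_cast f
  · rw [dvd_add_right (f.mul_left _)] at eB
    exact_mod_cast (hpi.dvd_or_dvd eB).resolve_left ne4

theorem den_dbl {N : ℕ} {x x2 : ℚ} (h0 : x2 * (4 * (x * (x ^ 2 - (N : ℚ) ^ 2))) =
    (x ^ 2 + (N : ℚ) ^ 2) ^ 2) {p : ℕ} (hp : p.Prime) (h1 : p ∣ x.den) : p ∣ x2.den := by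
  have hpi : Prime (p : ℤ) := Nat.prime_iff_prime_int.1 hp
  have h1' : (p : ℤ) ∣ x.den := by exact_mod_cast h1
  have k1 := Rat.num_div_den x
  have k2 := Rat.num_div_den x2
  have d1 : (x.den : ℚ) ≠ 0 := by exact_mod_cast x.den_nz
  have d2 : (x2.den : ℚ) ≠ 0 := by exact_mod_cast x2.den_nz
  rw [← k1, ← k2] at h0
  have q : x2.num * (4 * (x.num * x.den * (x.num ^ 2 - (N : ℤ) ^ 2 * x.den ^ 2))) =
      x2.den * (x.num ^ 2 + (N : ℤ) ^ 2 * x.den ^ 2) ^ 2 := by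
    field_simp at h0
    have : (x2.num * (4 * (x.num * x.den * (x.num ^ 2 - (N : ℚ) ^ 2 * x.den ^ 2))) : ℚ) =
      x2.den * (x.num ^ 2 + (N : ℚ) ^ 2 * x.den ^ 2) ^ 2 := by linear_combination h0
    exact_mod_cast this
  have nd : ¬ (p : ℤ) ∣ x.num := by
    intro e2
    obtain ⟨a, b, h⟩ := rat_coprime x
    exact hpi.not_dvd_one (h ▸ dvd_add (e2.mul_left a) (h1'.mul_left b))
  have hd : (p : ℤ) ∣ x2.den * (x.num ^ 2 + (N : ℤ) ^ 2 * x.den ^ 2) ^ 2 := by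
    rw [← q]
    exact (((h1'.mul_left _).mul_right _).mul_left _).mul_left _
  rcases hpi.dvd_or_dvd hd with f | f
  · exact_mod_cast f
  · exfalso
    have f := hpi.dvd_of_dvd_pow f
    rw [dvd_add_left ((dvd_pow h1' two_ne_zero).mul_left _)] at f
    exact nd (hpi.dvd_of_dvd_pow f)

theorem den_mul {N : ℕ} {X : ℤ → ℚ} (hX : XSeq N X) {p : ℕ} (hp : p.Prime) {m : ℤ} (hm : m ≠ 0)
    (h : p ∣ (X m).den) (k : ℕ) : p ∣ (X ((k + 1 : ℕ) * m)).den := by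
  induction k with
  | zero => simpa using h
  | succ k ih =>
    rcases Nat.eq_zero_or_pos k with rfl | hk
    · have := den_dbl (hX.dbl m hm) hp h
      simpa using this
    · have e1 : ((k + 1 : ℕ) : ℤ) * m ≠ 0 := mul_ne_zero (by positivity) hm
      have e2 : ((k + 1 : ℕ) : ℤ) * m ≠ m := by
        intro h
        have := mul_right_cancel₀ hm (h.trans (one_mul m).symm)
        push_cast at this
        omega
      have e3 : ((k + 1 : ℕ) : ℤ) * m ≠ -m := by
        intro h
        have := mul_right_cancel₀ hm (h.trans (neg_one_mul m).symm)
        push_cast at this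
        omega
      have := den_sp (hX.ne _ _ e1 hm e2 e3) (hX.sp _ _ e1 hm e2 e3) hp ih h
      convert this using 4
      push_cast
      ring

theorem int_of_mul {N : ℕ} {X : ℤ → ℚ} (hX : XSeq N X) {m : ℤ} (hm : m ≠ 0) (k : ℕ) (hk : k ≠ 0)
    (h : (X (k * m)).den = 1) : (X m).den = 1 := by
  by_contra hne
  obtain ⟨p, hp, hd⟩ := Nat.exists_prime_and_dvd hne
  have := den_mul hX hp hm hd (k - 1)
  rw [Nat.sub_add_cancel (by omega), h] at this
  exact hp.one_lt.ne' (Nat.dvd_one.1 this)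

theorem isInt_sq {z : ℤ} {r : ℚ} (h : (z : ℚ) = r ^ 2) : ∃ a : ℤ, z = a ^ 2 := by
  have : IsSquare (z : ℚ) := ⟨r, by rw [h, sq]⟩
  rw [Rat.isSquare_intCast_iff] at this
  obtain ⟨a, ha⟩ := this
  exact ⟨a, by rw [ha, sq]⟩

theorem no_even {N : ℕ} (hsq : Squarefree N) {x r s s' : ℚ} (hx : x.den = 1)
    (h1 : x = r ^ 2) (h2 : x - N = s ^ 2) (h3 : x + N = s' ^ 2) : False := by
  have hxz : (x.num : ℚ) = x := by
    conv_rhs => rw [← Rat.num_div_den x, hx]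
    simp
  obtain ⟨a, ha⟩ := isInt_sq (z := x.num) (r := r) (by rw [hxz, h1])
  obtain ⟨b, hb⟩ := isInt_sq (z := x.num - N) (r := s) (by push_cast; rw [hxz, h2])
  obtain ⟨c, hc⟩ := isInt_sq (z := x.num + N) (r := s') (by push_cast; rw [hxz, h3])
  have h4 : (4 : ℤ) ∣ N := by
    have e1 : (N : ℤ) = a ^ 2 - b ^ 2 := by linarith
    have e2 : (N : ℤ) = c ^ 2 - a ^ 2 := by linarith
    have ma : a ^ 2 % 4 = 0 ∨ a ^ 2 % 4 = 1 := by
      rcases Int.emod_two_eq_zero_or_one a with h | h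
      · left; obtain ⟨k, rfl⟩ := Int.dvd_of_emod_eq_zero h; ring_nf; omega
      · right; obtain ⟨k, rfl⟩ : ∃ k, a = 2 * k + 1 := ⟨a / 2, by omega⟩; ring_nf; omega
    have mb : b ^ 2 % 4 = 0 ∨ b ^ 2 % 4 = 1 := by
      rcases Int.emod_two_eq_zero_or_one b with h | h
      · left; obtain ⟨k, rfl⟩ := Int.dvd_of_emod_eq_zero h; ring_nf; omega
      · right; obtain ⟨k, rfl⟩ : ∃ k, b = 2 * k + 1 := ⟨b / 2, by omega⟩; ring_nf; omega
    have mc : c ^ 2 % 4 = 0 ∨ c ^ 2 % 4 = 1 := by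
      rcases Int.emod_two_eq_zero_or_one c with h | h
      · left; obtain ⟨k, rfl⟩ := Int.dvd_of_emod_eq_zero h; ring_nf; omega
      · right; obtain ⟨k, rfl⟩ : ∃ k, c = 2 * k + 1 := ⟨c / 2, by omega⟩; ring_nf; omega
    omega
  have h4' : 2 * 2 ∣ N := by exact_mod_cast h4
  have := hsq 2 h4'
  rw [Nat.isUnit_iff] at this
  omega

theorem int_num {x : ℚ} (hx : x.den = 1) : (x.num : ℚ) = x := by
  conv_rhs => rw [← Rat.num_div_den x, hx]
  simp

theorem p_dvd {N : ℕ} (hsq : Squarefree N) {X : ℤ → ℚ} (hX : XSeq N X) (k : ℤ) (hk : 1 ≤ k)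
    (h1 : (X 1).den = 1) (hn : (X (2 * k + 1)).den = 1) {p : ℕ} (hp : p.Prime) (hpN : p ∣ N)
    (hpx : (p : ℤ) ∣ (X 1).num) : (p : ℤ) ∣ (X (2 * k + 1)).num := by
  have hpi : Prime (p : ℤ) := Nat.prime_iff_prime_int.1 hp
  have hne := hX.ne (k + 1) k (by omega) (by omega) (by omega) (by omega)
  have hsp := hX.sp (k + 1) k (by omega) (by omega) (by omega) (by omega)
  rw [show k + 1 + k = 2 * k + 1 by ring, show k + 1 - k = 1 by ring, ← int_num h1,
    ← int_num hn] at hsp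
  generalize (X 1).num = x at *
  generalize (X (2 * k + 1)).num = z at *
  generalize X (k + 1) = a at *
  generalize X k = b at *
  obtain ⟨s1, s2⟩ := hsp
  have hd : a - b ≠ 0 := sub_ne_zero.2 hne
  obtain ⟨A, hA⟩ := isInt_sq (z := z * x) (r := (a * b + (N : ℚ) ^ 2) / (a - b)) (by
    push_cast; field_simp; linear_combination s2)
  obtain ⟨B, hB⟩ := isInt_sq (z := (z - N) * (x - N))
    (r := (a * b - N * a - N * b - (N : ℚ) ^ 2) / (a - b)) (by
    push_cast; field_simp; linear_combination s2 - N * s1)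
  by_contra hz
  have hpN' : (p : ℤ) ∣ (N : ℤ) := by exact_mod_cast hpN
  have step : ∀ u v w : ℤ, u * v = w ^ 2 → ¬ (p : ℤ) ∣ u → (p : ℤ) ∣ v → (p : ℤ) ^ 2 ∣ v := by
    intro u v w h hu hv
    have hw : (p : ℤ) ∣ w := hpi.dvd_of_dvd_pow (h ▸ hv.mul_left u)
    have h2 : (p : ℤ) ^ 2 ∣ u * v := h ▸ pow_dvd_pow_of_dvd hw 2
    have hc : IsCoprime ((p : ℤ) ^ 2) u := by
      apply IsCoprime.pow_left
      exact (Prime.coprime_iff_not_dvd hpi).2 hu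
    exact hc.dvd_of_dvd_mul_left h2
  have e1 := step _ _ _ hA hz hpx
  have e2 := step _ _ _ hB (fun h => hz ((dvd_sub_left hpN').1 h)) (dvd_sub hpx hpN')
  have e3 : (p : ℤ) ^ 2 ∣ (N : ℤ) := by
    have := dvd_sub e1 e2
    simpa using this
  have e4 : p * p ∣ N := by rw [← sq]; exact_mod_cast e3
  have := hsq p e4
  rw [Nat.isUnit_iff] at this
  exact hp.one_lt.ne' this

theorem sqfree_dvd {N k : ℕ} (hsq : Squarefree N) (h : ∀ p : ℕ, p.Prime → p ∣ N → p ∣ k) :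
    N ∣ k := by
  rw [← Nat.prod_primeFactors_of_squarefree hsq]
  apply Finset.prod_primes_dvd
  · intro p hp
    exact Nat.prime_iff.1 (Nat.prime_of_mem_primeFactors hp)
  · intro p hp
    exact h p (Nat.prime_of_mem_primeFactors hp) (Nat.dvd_of_mem_primeFactors hp)

theorem den_le {N : ℕ} (hN : 0 < N) (hsq : Squarefree N) {X : ℤ → ℚ} (hX : XSeq N X) (k : ℤ)
    (hk : 1 ≤ k) (h1 : (X 1).den = 1) (hn : (X (2 * k + 1)).den = 1) :
    (X (2 * k + 1) / N).den ≤ (X 1 / N).den := by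
  have hN0 : (N : ℚ) ≠ 0 := by positivity
  set M := (X 1 / N).den with hM
  have hMpos : 0 < M := Rat.den_pos _
  have key : (X 1 / N).num * N = (X 1).num * M := by
    have e : ((X 1 / N).num : ℚ) / M = X 1 / N := Rat.num_div_den _
    have hM0 : (M : ℚ) ≠ 0 := by positivity
    rw [div_eq_div_iff hM0 hN0] at e
    have e' : ((X 1 / N).num : ℚ) * N = (X 1).num * M := by rw [int_num h1]; exact e
    exact_mod_cast e'
  have hd : N ∣ ((X (2 * k + 1)).num * M).natAbs := by
    apply sqfree_dvd hsq
    intro p hp hpN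
    have hpi : Prime (p : ℤ) := Nat.prime_iff_prime_int.1 hp
    rw [← Int.natCast_dvd]
    by_cases hpx : (p : ℤ) ∣ (X 1).num
    · exact (p_dvd hsq hX k hk h1 hn hp hpN hpx).mul_right _
    · have : (p : ℤ) ∣ (X 1).num * M := by
        rw [← key]
        exact Dvd.dvd.mul_left (by exact_mod_cast hpN) _
      exact ((hpi.dvd_or_dvd this).resolve_left hpx).mul_left _
  rw [← Int.natCast_dvd] at hd
  obtain ⟨c, hc⟩ := hd
  have : X (2 * k + 1) / N = (c : ℚ) / (M : ℤ) := by
    rw [← int_num hn]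
    have hM0 : (M : ℚ) ≠ 0 := by positivity
    push_cast
    rw [div_eq_div_iff hN0 hM0]
    have : ((X (2 * k + 1)).num * M : ℚ) = N * c := by exact_mod_cast hc
    linarith
  rw [this]
  have := Rat.den_dvd c (M : ℤ)
  have h2 := Int.le_of_dvd (by exact_mod_cast hMpos) this
  rw [Rat.divInt_eq_div] at h2
  exact_mod_cast h2

theorem XSeq.scale {N : ℕ} (hN : 0 < N) {X : ℤ → ℚ} (hX : XSeq N X) :
    XSeq 1 (fun m => X m / N) := by
  have hN0 : (N : ℚ) ≠ 0 := by positivity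
  have hNp : (0 : ℚ) < N := by positivity
  refine ⟨fun m => by simp [hX.neg], ?_, ?_, ?_, ?_⟩
  · intro m n a b c d h
    exact hX.ne m n a b c d ((div_left_inj' hN0).1 h)
  · intro m n a b c d
    obtain ⟨h1, h2⟩ := hX.sp m n a b c d
    constructor
    · field_simp; push_cast; linear_combination h1
    · field_simp; push_cast; linear_combination h2
  · intro m a
    have := hX.pos m a
    have e : X m / N * ((X m / N) ^ 2 - ((1 : ℕ) : ℚ) ^ 2) =
      X m * (X m ^ 2 - (N : ℚ) ^ 2) / N ^ 3 := by
      field_simp; push_cast; ring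
    rw [e]
    positivity
  · intro m a
    have := hX.dbl m a
    field_simp; push_cast; linear_combination this

/-- naive height -/
def H0 (t : ℚ) : ℤ := t.num ^ 2 + (t.den : ℤ) ^ 2

open Classical in
/-- modified naive height -/
noncomputable def Ht (t : ℚ) : ℝ :=
  if Odd t.num ∧ Odd (t.den : ℤ) then (H0 t : ℝ) / 2 else H0 t

theorem rat_eps {t : ℚ} {a b : ℤ} (hb : b ≠ 0) (hc : IsCoprime a b) (h : t * b = a) :
    (t.num = a ∧ (t.den : ℤ) = b) ∨ (t.num = -a ∧ (t.den : ℤ) = -b) := by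
  have hb' : (b : ℚ) ≠ 0 := by exact_mod_cast hb
  have ht : t = a / b := by field_simp; exact h
  rw [Int.isCoprime_iff_gcd_eq_one] at hc
  rcases lt_or_gt_of_ne hb with h0 | h0
  · right
    have ht' : t = ((-a : ℤ) : ℚ) / ((-b : ℤ) : ℚ) := by rw [ht]; push_cast; rw [neg_div_neg_eq]
    have hc' : Nat.Coprime (-a).natAbs (-b).natAbs := by simpa [Int.gcd] using hc
    rw [ht']
    exact ⟨Rat.num_div_eq_of_coprime (by omega) hc', Rat.den_div_eq_of_coprime (by omega) hc'⟩
  · left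
    have hc' : Nat.Coprime (a).natAbs (b).natAbs := by simpa [Int.gcd] using hc
    rw [ht]
    exact ⟨Rat.num_div_eq_of_coprime (by omega) hc', Rat.den_div_eq_of_coprime (by omega) hc'⟩

theorem Ht_even {t : ℚ} {a b : ℤ} (hb : b ≠ 0) (hc : IsCoprime a b) (h : t * b = a)
    (hbe : Even b) : Ht t = (a : ℝ) ^ 2 + (b : ℝ) ^ 2 := by
  unfold Ht H0
  rcases rat_eps hb hc h with ⟨h1, h2⟩ | ⟨h1, h2⟩
  · rw [if_neg, h1, h2]
    · push_cast; ring
    · rw [h2]; rintro ⟨-, h3⟩; exact Int.not_odd_iff_even.2 hbe h3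
  · rw [if_neg, h1, h2]
    · push_cast; ring
    · rw [h2]; rintro ⟨-, h3⟩; exact Int.not_odd_iff_even.2 hbe.neg h3

theorem H0_pos (t : ℚ) : 1 ≤ H0 t := by
  unfold H0
  have : (0 : ℤ) < t.den := by exact_mod_cast t.den_pos
  nlinarith [sq_nonneg t.num]

theorem Ht_le (t : ℚ) : Ht t ≤ H0 t := by
  have : (1 : ℝ) ≤ H0 t := by exact_mod_cast H0_pos t
  unfold Ht
  split_ifs <;> linarith

theorem Ht_ge (t : ℚ) : (H0 t : ℝ) / 2 ≤ Ht t := by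
  have : (1 : ℝ) ≤ H0 t := by exact_mod_cast H0_pos t
  unfold Ht
  split_ifs <;> linarith

theorem Ht_five {t : ℚ} (h : 0 < t * (t ^ 2 - 1)) : 5 ≤ Ht t := by
  have hu : t.num ≠ 0 := by
    intro h0
    rw [Rat.num_eq_zero] at h0
    simp [h0] at h
  have hw : (0 : ℤ) < t.den := by exact_mod_cast t.den_pos
  have hne : |t.num| ≠ t.den := by
    intro h0
    have h1 : t.num ^ 2 = (t.den : ℤ) ^ 2 := by rw [← sq_abs, h0]
    have h2 : t ^ 2 = 1 := by
      rw [← Rat.num_div_den t, div_pow]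
      have : (t.num : ℚ) ^ 2 = (t.den : ℚ) ^ 2 := by exact_mod_cast h1
      rw [this]
      apply div_self
      have : (t.den : ℚ) ≠ 0 := by exact_mod_cast t.den_nz
      positivity
    rw [h2] at h
    simp at h
  have hu' : 0 < |t.num| := abs_pos.2 hu
  unfold Ht
  have hH : H0 t = |t.num| ^ 2 + (t.den : ℤ) ^ 2 := by rw [sq_abs, H0]
  split_ifs with ho
  · obtain ⟨o1, o2⟩ := ho
    have o1' : Odd |t.num| := by rwa [odd_abs]
    have : 10 ≤ H0 t := by
      rw [hH]
      obtain ⟨r, hr⟩ := o1'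
      obtain ⟨s, hs⟩ := o2
      rcases le_or_gt 1 r with h1 | h1
      · have : 3 ≤ |t.num| := by omega
        nlinarith
      · have : 3 ≤ (t.den : ℤ) := by omega
        nlinarith
    have : (10 : ℝ) ≤ H0 t := by exact_mod_cast this
    linarith
  · have : 5 ≤ H0 t := by
      rw [hH]
      rcases le_or_gt 2 |t.num| with h1 | h1
      · nlinarith
      · have : 2 ≤ (t.den : ℤ) := by
          clear hH
          omega
        nlinarith
    exact_mod_cast this

theorem cop_aux {u w c : ℤ} (h : IsCoprime u w) (hc : Odd c) (hd : c ∣ u ^ 2 + w ^ 2) :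
    IsCoprime c (4 * (u * w * (u ^ 2 - w ^ 2))) := by
  have c2 : IsCoprime c 2 := Int.isCoprime_two_right.2 hc
  have cu0 : IsCoprime (u ^ 2 + w ^ 2) u := by
    have : IsCoprime (w ^ 2 + u * u) u := (IsCoprime.pow_left h.symm).add_mul_left_left u
    convert this using 1; ring
  have cw0 : IsCoprime (u ^ 2 + w ^ 2) w := by
    have : IsCoprime (u ^ 2 + w * w) w := (IsCoprime.pow_left h).add_mul_left_left w
    convert this using 1; ring
  have cu := cu0.of_isCoprime_of_dvd_left hd
  have cw := cw0.of_isCoprime_of_dvd_left hd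
  have cd : IsCoprime c (u ^ 2 - w ^ 2) := by
    obtain ⟨k, hk⟩ := hd
    have : IsCoprime c (2 * u ^ 2 + c * (-k)) :=
      (c2.mul_right (IsCoprime.pow_right cu)).add_mul_left_right (-k)
    convert this using 1
    linarith
  have c4 : IsCoprime c 4 := by
    have := c2.mul_right c2
    norm_num at this
    exact this
  exact c4.mul_right ((cu.mul_right cw).mul_right cd)

theorem Ht_dbl {t t2 : ℚ} (h : 0 < t * (t ^ 2 - 1))
    (h2 : t2 * (4 * (t * (t ^ 2 - 1))) = (t ^ 2 + 1) ^ 2) :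
    Ht t ^ 4 ≤ Ht t2 ∧ Ht t2 ≤ 2 * Ht t ^ 4 := by
  have hw : (t.den : ℚ) ≠ 0 := by exact_mod_cast t.den_nz
  have hcop := rat_coprime t
  have hwz : (t.den : ℤ) ≠ 0 := by exact_mod_cast t.den_nz
  have k := Rat.num_div_den t
  have hG : t.num * t.den * (t.num ^ 2 - (t.den : ℤ) ^ 2) ≠ 0 := by
    intro h0
    have h0' : (t.num * t.den * (t.num ^ 2 - (t.den : ℚ) ^ 2) : ℚ) = 0 := by exact_mod_cast h0
    have : t * (t ^ 2 - 1) =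
        (t.num * t.den * (t.num ^ 2 - (t.den : ℚ) ^ 2) : ℚ) / t.den ^ 4 := by
      conv_lhs => rw [← k]
      field_simp
    rw [this, h0'] at h
    simp at h
  have heq : t2 * (4 * (t.num * t.den * (t.num ^ 2 - (t.den : ℚ) ^ 2))) =
      (t.num ^ 2 + (t.den : ℚ) ^ 2) ^ 2 := by
    rw [← k] at h2
    field_simp at h2
    linear_combination h2
  have hid : ((t.num : ℝ) ^ 2 + (t.den : ℝ) ^ 2) ^ 4 -
      (4 * (t.num * t.den * ((t.num : ℝ) ^ 2 - (t.den : ℝ) ^ 2))) ^ 2 =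
      (((t.num : ℝ) ^ 2 - 2 * t.num * t.den - (t.den : ℝ) ^ 2) *
        ((t.num : ℝ) ^ 2 + 2 * t.num * t.den - (t.den : ℝ) ^ 2)) ^ 2 := by ring
  have hin := sq_nonneg (((t.num : ℝ) ^ 2 - 2 * t.num * t.den - (t.den : ℝ) ^ 2) *
        ((t.num : ℝ) ^ 2 + 2 * t.num * t.den - (t.den : ℝ) ^ 2))
  rw [← hid] at hin
  by_cases ho : Odd t.num ∧ Odd (t.den : ℤ)
  · obtain ⟨⟨r, hr⟩, ⟨s, hs⟩⟩ := ho
    obtain ⟨c, hc, hco⟩ : ∃ c : ℤ, t.num ^ 2 + (t.den : ℤ) ^ 2 = 2 * c ∧ Odd c :=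
      ⟨2 * (r ^ 2 + r + s ^ 2 + s) + 1, by rw [hr, hs]; ring, ⟨_, rfl⟩⟩
    have hcop2 := cop_aux hcop hco ⟨2, by rw [hc]; ring⟩
    have hcop3 : IsCoprime (c ^ 2) (t.num * t.den * (t.num ^ 2 - (t.den : ℤ) ^ 2)) :=
      IsCoprime.pow_left (hcop2.of_isCoprime_of_dvd_right ⟨4, by ring⟩)
    have hcq : ((t.num : ℚ) ^ 2 + (t.den : ℚ) ^ 2) = 2 * c := by exact_mod_cast hc
    have hcr : ((t.num : ℝ) ^ 2 + (t.den : ℝ) ^ 2) = 2 * c := by exact_mod_cast hc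
    have e2 := Ht_even (t := t2) hG hcop3 (by
      push_cast
      rw [hcq] at heq
      linear_combination heq / 4) (by
      apply Even.mul_left
      exact ⟨2 * (r ^ 2 + r - s ^ 2 - s), by rw [hr, hs]; ring⟩)
    have e1 : Ht t = c := by
      unfold Ht
      rw [if_pos ⟨⟨r, hr⟩, ⟨s, hs⟩⟩, H0, hc]
      push_cast; ring
    rw [e1, e2]
    rw [hcr] at hin
    push_cast
    constructor
    · nlinarith [sq_nonneg (t.num * t.den * ((t.num : ℝ) ^ 2 - (t.den : ℝ) ^ 2))]
    · nlinarith
  · have hodd : Odd (t.num ^ 2 + (t.den : ℤ) ^ 2) := by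
      rcases Int.even_or_odd t.num with a | a <;> rcases Int.even_or_odd (t.den : ℤ) with b | b
      · exfalso
        have := hcop.of_isCoprime_of_dvd_left a.two_dvd
        have := this.of_isCoprime_of_dvd_right b.two_dvd
        rw [Int.isCoprime_iff_gcd_eq_one] at this
        norm_num at this
      · exact (a.pow_of_ne_zero two_ne_zero).add_odd b.pow
      · exact a.pow.add_even (b.pow_of_ne_zero two_ne_zero)
      · exact absurd ⟨a, b⟩ ho
    have hcop2 := cop_aux hcop hodd dvd_rfl
    have e2 := Ht_even (t := t2) (mul_ne_zero four_ne_zero hG) (IsCoprime.pow_left (m := 2) hcop2) (by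
      push_cast
      linear_combination heq) ⟨2 * (t.num * t.den * (t.num ^ 2 - (t.den : ℤ) ^ 2)), by ring⟩
    have e1 : Ht t = (t.num : ℝ) ^ 2 + (t.den : ℝ) ^ 2 := by
      unfold Ht
      rw [if_neg ho, H0]
      push_cast; ring
    rw [e1, e2]
    push_cast
    constructor
    · nlinarith [sq_nonneg (4 * (t.num * t.den * ((t.num : ℝ) ^ 2 - (t.den : ℝ) ^ 2)))]
    · nlinarith

theorem H0_sp {t1 t2 t3 t4 : ℚ} (hne : t1 ≠ t2) (h : SP 1 t1 t2 t3 t4) :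
    H0 t3 * H0 t4 ≤ 5 * (H0 t1 ^ 2 * H0 t2 ^ 2) := by
  obtain ⟨e, he, hA, hB, hC⟩ := prim 1 hne (by simpa using h)
  unfold H0
  generalize t1.num = u1 at *
  generalize t2.num = u2 at *
  generalize t3.num = u3 at *
  generalize t4.num = u4 at *
  generalize (t1.den : ℤ) = w1 at *
  generalize (t2.den : ℤ) = w2 at *
  generalize (t3.den : ℤ) = w3 at *
  generalize (t4.den : ℤ) = w4 at *
  have he2 : 1 ≤ e ^ 2 := by
    have := sq_pos_of_ne_zero he
    omega
  have l1 : (u3 ^ 2 + w3 ^ 2) * (u4 ^ 2 + w4 ^ 2) =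
      (w3 * w4 - u3 * u4) ^ 2 + (u3 * w4 + u4 * w3) ^ 2 := by ring
  have l2 : (w3 * w4 - u3 * u4) ^ 2 + (u3 * w4 + u4 * w3) ^ 2 ≤
      e ^ 2 * ((w3 * w4 - u3 * u4) ^ 2 + (u3 * w4 + u4 * w3) ^ 2) := by
    nlinarith [sq_nonneg (w3 * w4 - u3 * u4), sq_nonneg (u3 * w4 + u4 * w3)]
  have l3 : e ^ 2 * ((w3 * w4 - u3 * u4) ^ 2 + (u3 * w4 + u4 * w3) ^ 2) =
      ((u1 * w2 - u2 * w1) ^ 2 - (u1 * u2 + w1 * w2) ^ 2) ^ 2 +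
      (2 * (u1 * w2 + u2 * w1) * (u1 * u2 - w1 * w2)) ^ 2 := by
    have hB' : 2 * (u1 * w2 + u2 * w1) * (u1 * u2 - w1 * w2) = e * (u3 * w4 + u4 * w3) := by
      rw [← hB]; ring
    have hC' : (u1 * u2 + w1 * w2) ^ 2 = e * (u3 * u4) := by rw [← hC]; ring
    rw [hB', hA, hC']; ring
  have m1 : (u1 * w2 - u2 * w1) ^ 2 + (u1 * u2 + w1 * w2) ^ 2 =
    (u1 ^ 2 + w1 ^ 2) * (u2 ^ 2 + w2 ^ 2) := by ring
  have m2 : (u1 * w2 + u2 * w1) ^ 2 + (u1 * u2 - w1 * w2) ^ 2 =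
    (u1 ^ 2 + w1 ^ 2) * (u2 ^ 2 + w2 ^ 2) := by ring
  rw [l1, ← mul_pow]
  refine l2.trans (l3.le.trans ?_)
  have p1 := sq_nonneg (u1 * w2 - u2 * w1)
  have p2 := sq_nonneg (u1 * u2 + w1 * w2)
  have p3 := sq_nonneg (u1 * w2 + u2 * w1)
  have p4 := sq_nonneg (u1 * u2 - w1 * w2)
  have : (2 * (u1 * w2 + u2 * w1) * (u1 * u2 - w1 * w2)) ^ 2 =
    4 * ((u1 * w2 + u2 * w1) ^ 2 * (u1 * u2 - w1 * w2) ^ 2) := by ring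
  rw [this]
  generalize (u1 * w2 - u2 * w1) ^ 2 = a at *
  generalize (u1 * u2 + w1 * w2) ^ 2 = b at *
  generalize (u1 * w2 + u2 * w1) ^ 2 = c at *
  generalize (u1 * u2 - w1 * w2) ^ 2 = d at *
  have q1 : (a - b) ^ 2 ≤ (a + b) ^ 2 := by nlinarith [mul_nonneg p1 p2]
  have q2 : 4 * (c * d) ≤ 4 * (c + d) ^ 2 := by nlinarith [mul_nonneg p3 p4, sq_nonneg c, sq_nonneg d]
  rw [m1] at q1
  rw [m2] at q2
  linarith

/-- log height along the sequence -/
noncomputable def lh (T : ℤ → ℚ) (m : ℤ) : ℝ := Real.log (Ht (T m))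

theorem lh_dbl {T : ℤ → ℚ} (hT : XSeq 1 T) {m : ℤ} (hm : m ≠ 0) :
    4 * lh T m ≤ lh T (2 * m) ∧ lh T (2 * m) ≤ 4 * lh T m + Real.log 2 := by
  have hp := hT.pos m hm
  have hd := hT.dbl m hm
  simp only [Nat.cast_one, one_pow] at hp hd
  have h5 := Ht_five hp
  obtain ⟨h1, h2⟩ := Ht_dbl hp hd
  have h0 : 0 < Ht (T m) := by linarith
  have h4 : 0 < Ht (T m) ^ 4 := by positivity
  unfold lh
  have e : 4 * Real.log (Ht (T m)) = Real.log (Ht (T m) ^ 4) := by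
    rw [Real.log_pow]; norm_num
  rw [e]
  constructor
  · exact Real.log_le_log h4 h1
  · rw [← Real.log_mul h4.ne' two_ne_zero, mul_comm (Ht (T m) ^ 4) 2]
    exact Real.log_le_log (lt_of_lt_of_le h4 h1) h2

/-- approximants of the canonical height -/
noncomputable def ah (T : ℤ → ℚ) (m : ℤ) (k : ℕ) : ℝ := lh T (2 ^ k * m) / 4 ^ k

theorem ah_mono {T : ℤ → ℚ} (hT : XSeq 1 T) {m : ℤ} (hm : m ≠ 0) : Monotone (ah T m) := by
  apply monotone_nat_of_le_succ
  intro k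
  have := (lh_dbl hT (m := 2 ^ k * m) (mul_ne_zero (by positivity) hm)).1
  unfold ah
  rw [pow_succ, pow_succ, mul_comm ((2 : ℤ) ^ k) 2, mul_assoc, div_le_div_iff₀ (by positivity) (by positivity)]
  have h4 : (0 : ℝ) < 4 ^ k := by positivity
  nlinarith

theorem ah_le {T : ℤ → ℚ} (hT : XSeq 1 T) {m : ℤ} (hm : m ≠ 0) (k : ℕ) :
    ah T m k ≤ lh T m + Real.log 2 * (1 - 1 / 4 ^ k) := by
  induction k with
  | zero => simp [ah]
  | succ k ih =>
    have := (lh_dbl hT (m := 2 ^ k * m) (mul_ne_zero (by positivity) hm)).2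
    have h4 : (0 : ℝ) < 4 ^ k := by positivity
    have hl : 0 < Real.log 2 := Real.log_pos (by norm_num)
    have e : ah T m (k + 1) ≤ ah T m k + Real.log 2 / (4 * 4 ^ k) := by
      unfold ah
      rw [pow_succ, pow_succ, mul_comm ((2 : ℤ) ^ k) 2, mul_assoc]
      rw [div_add_div _ _ (by positivity) (by positivity), div_le_div_iff₀ (by positivity) (by positivity)]
      have h3 := mul_le_mul_of_nonneg_right this (by positivity : (0 : ℝ) ≤ 4 ^ k * (4 * 4 ^ k))
      linarith
    have e2 : Real.log 2 / (4 * 4 ^ k) + Real.log 2 * (1 - 1 / 4 ^ k) ≤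
        Real.log 2 * (1 - 1 / 4 ^ (k + 1)) := by
      have : Real.log 2 * (1 - 1 / 4 ^ (k + 1)) - (Real.log 2 / (4 * 4 ^ k) +
        Real.log 2 * (1 - 1 / 4 ^ k)) = Real.log 2 / (2 * 4 ^ k) := by
        field_simp; ring
      have : 0 ≤ Real.log 2 / (2 * 4 ^ k) := by positivity
      linarith
    linarith

theorem ah_le' {T : ℤ → ℚ} (hT : XSeq 1 T) {m : ℤ} (hm : m ≠ 0) (k : ℕ) :
    ah T m k ≤ lh T m + Real.log 2 := by
  have h := ah_le hT hm k
  have hl : 0 < Real.log 2 := Real.log_pos (by norm_num)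
  have : 0 ≤ Real.log 2 * (1 / 4 ^ k) := by positivity
  linarith

/-- canonical height -/
noncomputable def ch (T : ℤ → ℚ) (m : ℤ) : ℝ := ⨆ k, ah T m k

theorem ch_tendsto {T : ℤ → ℚ} (hT : XSeq 1 T) {m : ℤ} (hm : m ≠ 0) :
    Filter.Tendsto (ah T m) Filter.atTop (nhds (ch T m)) := by
  apply tendsto_atTop_ciSup (ah_mono hT hm)
  refine ⟨lh T m + Real.log 2, ?_⟩
  rintro _ ⟨k, rfl⟩
  exact ah_le' hT hm k

theorem ch_bounds {T : ℤ → ℚ} (hT : XSeq 1 T) {m : ℤ} (hm : m ≠ 0) :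
    lh T m ≤ ch T m ∧ ch T m ≤ lh T m + Real.log 2 := by
  constructor
  · have := (ah_mono hT hm).ge_of_tendsto (ch_tendsto hT hm) 0
    simpa [ah] using this
  · exact le_of_tendsto' (ch_tendsto hT hm) (ah_le' hT hm)

theorem ch_dbl {T : ℤ → ℚ} (hT : XSeq 1 T) {m : ℤ} (hm : m ≠ 0) : ch T (2 * m) = 4 * ch T m := by
  have h1 := ch_tendsto hT (m := 2 * m) (by omega)
  have h2 := (ch_tendsto hT hm).comp (Filter.tendsto_add_atTop_nat 1)
  have h3 := h2.const_mul 4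
  refine tendsto_nhds_unique h1 (h3.congr ?_)
  intro k
  simp only [ah, Function.comp]
  rw [pow_succ, pow_succ, mul_assoc]
  field_simp

theorem lh_sp {T : ℤ → ℚ} (hT : XSeq 1 T) {m n : ℤ} (hm : m ≠ 0) (hn : n ≠ 0) (h : m ≠ n)
    (h' : m ≠ -n) : lh T (m + n) + lh T (m - n) ≤ 2 * lh T m + 2 * lh T n + Real.log 80 := by
  have key := H0_sp (hT.ne m n hm hn h h') (by simpa using hT.sp m n hm hn h h')
  have key' : (H0 (T (m + n)) * H0 (T (m - n)) : ℝ) ≤ 5 * (H0 (T m) ^ 2 * H0 (T n) ^ 2) := by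
    exact_mod_cast key
  have pos : ∀ k : ℤ, 0 < (H0 (T k) : ℝ) := fun k => by
    have := H0_pos (T k)
    exact_mod_cast (by omega : 0 < H0 (T k))
  have tpos : ∀ k : ℤ, 0 < Ht (T k) := fun k => by
    have := Ht_ge (T k)
    have := pos k
    linarith
  have u3 := Ht_le (T (m + n))
  have u4 := Ht_le (T (m - n))
  have l1 := Ht_ge (T m)
  have l2 := Ht_ge (T n)
  have b : Ht (T (m + n)) * Ht (T (m - n)) ≤ 80 * (Ht (T m) ^ 2 * Ht (T n) ^ 2) := by
    calc Ht (T (m + n)) * Ht (T (m - n)) ≤ H0 (T (m + n)) * H0 (T (m - n)) :=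
          mul_le_mul u3 u4 (tpos _).le (pos _).le
      _ ≤ 5 * (H0 (T m) ^ 2 * H0 (T n) ^ 2) := key'
      _ ≤ 5 * ((2 * Ht (T m)) ^ 2 * (2 * Ht (T n)) ^ 2) := by
          have := pos m
          have := pos n
          gcongr <;> linarith
      _ = _ := by ring
  have p1 := tpos m
  have p2 := tpos n
  have p3 := tpos (m + n)
  have p4 := tpos (m - n)
  have := Real.log_le_log (mul_pos p3 p4) b
  rw [Real.log_mul p3.ne' p4.ne', Real.log_mul (by norm_num) (by positivity),
    Real.log_mul (by positivity) (by positivity), Real.log_pow, Real.log_pow] at this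
  unfold lh
  push_cast at this
  linarith

theorem ch_le {T : ℤ → ℚ} (hT : XSeq 1 T) {m n : ℤ} (hm : m ≠ 0) (hn : n ≠ 0) (h : m ≠ n)
    (h' : m ≠ -n) : ch T (m + n) + ch T (m - n) ≤ 2 * ch T m + 2 * ch T n := by
  have t1 := (ch_tendsto hT (m := m + n) (by omega)).add (ch_tendsto hT (m := m - n) (by omega))
  have hz : Filter.Tendsto (fun k : ℕ => Real.log 80 * (1 / 4 : ℝ) ^ k) Filter.atTop (nhds (Real.log 80 * 0)) :=
    (tendsto_pow_atTop_nhds_zero_of_lt_one (by norm_num) (by norm_num)).const_mul _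
  have t2 := (((ch_tendsto hT hm).const_mul 2).add ((ch_tendsto hT hn).const_mul 2)).add hz
  rw [mul_zero, add_zero] at t2
  refine le_of_tendsto_of_tendsto' t1 t2 ?_
  intro k
  have hk : (2 : ℤ) ^ k ≠ 0 := by positivity
  have := lh_sp hT (m := 2 ^ k * m) (n := 2 ^ k * n) (mul_ne_zero hk hm) (mul_ne_zero hk hn)
    (fun e => h (mul_left_cancel₀ hk e)) (fun e => h' (mul_left_cancel₀ hk (by rw [e]; ring)))
  rw [← mul_add, ← mul_sub] at this
  simp only [ah]
  have h4 : (0 : ℝ) < 4 ^ k := by positivity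
  rw [div_pow, one_pow, ← sub_nonneg]
  have e : 2 * (lh T (2 ^ k * m) / 4 ^ k) + 2 * (lh T (2 ^ k * n) / 4 ^ k) + Real.log 80 * (1 / 4 ^ k) -
      (lh T (2 ^ k * (m + n)) / 4 ^ k + lh T (2 ^ k * (m - n)) / 4 ^ k) =
      (2 * lh T (2 ^ k * m) + 2 * lh T (2 ^ k * n) + Real.log 80 - (lh T (2 ^ k * (m + n)) +
        lh T (2 ^ k * (m - n)))) / 4 ^ k := by ring
  rw [e]
  apply div_nonneg _ h4.le
  linarith

theorem ch_eq {T : ℤ → ℚ} (hT : XSeq 1 T) {m n : ℤ} (hm : m ≠ 0) (hn : n ≠ 0) (h : m ≠ n)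
    (h' : m ≠ -n) : ch T (m + n) + ch T (m - n) = 2 * ch T m + 2 * ch T n := by
  apply le_antisymm (ch_le hT hm hn h h')
  have := ch_le hT (m := m + n) (n := m - n) (by omega) (by omega) (by omega) (by omega)
  rw [show m + n + (m - n) = 2 * m by ring, show m + n - (m - n) = 2 * n by ring, ch_dbl hT hm,
    ch_dbl hT hn] at this
  linarith

theorem ch_sq {T : ℤ → ℚ} (hT : XSeq 1 T) (n : ℕ) :
    ch T (n + 1 : ℕ) = (n + 1) ^ 2 * ch T 1 ∧ ch T (n + 2 : ℕ) = (n + 2) ^ 2 * ch T 1 := by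
  induction n with
  | zero =>
    refine ⟨by simp, ?_⟩
    have := ch_dbl hT (m := 1) one_ne_zero
    norm_num at this ⊢
    exact this
  | succ n ih =>
    refine ⟨?_, ?_⟩
    · rw [show n + 1 + 1 = n + 2 by ring, ih.2]; push_cast; ring
    · have := ch_eq hT (m := (n + 2 : ℕ)) (n := 1) (by omega) one_ne_zero (by omega) (by omega)
      rw [show ((n + 2 : ℕ) : ℤ) - 1 = (n + 1 : ℕ) by push_cast; ring, ih.1, ih.2,
        show ((n + 2 : ℕ) : ℤ) + 1 = (n + 1 + 2 : ℕ) by push_cast; ring] at this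
      push_cast at this ⊢
      linarith

theorem ht_pow {T : ℤ → ℚ} (hT : XSeq 1 T) (a b : ℕ) (ha : 1 ≤ a) (hb : 1 ≤ b) :
    Ht (T a) ^ (b ^ 2) ≤ 2 * Ht (T (a * b : ℕ)) := by
  have hab : 1 ≤ a * b := Nat.mul_pos ha hb
  have sqf : ∀ n : ℕ, 1 ≤ n → ch T n = n ^ 2 * ch T 1 := by
    intro n hn
    obtain ⟨k, rfl⟩ := Nat.exists_eq_add_of_le hn
    rw [add_comm 1 k, (ch_sq hT k).1]
    push_cast; ring
  have e : ch T (a * b : ℕ) = b ^ 2 * ch T a := by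
    rw [sqf _ hab, sqf _ ha]; push_cast; ring
  have b1 := (ch_bounds hT (m := a) (by omega)).1
  have b2 := (ch_bounds hT (m := (a * b : ℕ)) (by omega)).2
  have tpos : ∀ k : ℤ, 0 < Ht (T k) := fun k => by
    have := Ht_ge (T k)
    have : (1 : ℝ) ≤ H0 (T k) := by exact_mod_cast H0_pos (T k)
    linarith
  have p1 := tpos a
  have p2 := tpos (a * b : ℕ)
  rw [← Real.log_le_log_iff (by positivity) (by positivity), Real.log_pow,
    Real.log_mul (by norm_num) p2.ne']
  unfold lh at b1 b2
  push_cast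
  push_cast at e b2
  have : (b : ℝ) ^ 2 * Real.log (Ht (T a)) ≤ b ^ 2 * ch T a := by gcongr
  linarith

theorem one_step {a x α β : ℚ} (h2 : 2 ≤ x) (hxa : x < a) (hα : x < α) (h : SP 1 x a β α) :
    β < x ∧ x / 4 ≤ β := by
  obtain ⟨h1, h2'⟩ := h
  have hd : 0 < (x - a) ^ 2 := by
    have : x - a ≠ 0 := sub_ne_zero.2 hxa.ne
    positivity
  have hx : 0 < x := by linarith
  have ha : 0 < a := by linarith
  have f : (x - α) * (x - β) * (x - a) ^ 2 = (x ^ 2 + 1) ^ 2 - 4 * a * (x ^ 3 - x) := by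
    linear_combination (-x) * h1 + h2'
  have fneg : (x ^ 2 + 1) ^ 2 - 4 * a * (x ^ 3 - x) < 0 := by
    have x3 : 0 < x ^ 3 - x := by
      have : x ^ 3 - x = x * (x - 1) * (x + 1) := by ring
      rw [this]
      have : 0 < x - 1 := by linarith
      positivity
    have : 4 * x * (x ^ 3 - x) < 4 * a * (x ^ 3 - x) := by nlinarith
    have : (x ^ 2 + 1) ^ 2 ≤ 4 * x * (x ^ 3 - x) := by
      have h4 : 4 ≤ x ^ 2 := by nlinarith
      nlinarith
    linarith
  have hβ : β < x := by
    by_contra hc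
    have : 0 ≤ (α - x) * (β - x) * (x - a) ^ 2 := by
      apply mul_nonneg (mul_nonneg (by linarith) (by linarith)) hd.le
    have e : (α - x) * (β - x) * (x - a) ^ 2 = (x - α) * (x - β) * (x - a) ^ 2 := by ring
    linarith
  refine ⟨hβ, ?_⟩
  have hpr : 0 < β * α := by
    have : 0 < (β * α) * (x - a) ^ 2 := by
      rw [h2']
      have := mul_pos hx ha
      positivity
    exact (pos_iff_pos_of_mul_pos this).2 hd
  have hαp : 0 < α := by linarith
  have hβp : 0 < β := (pos_iff_pos_of_mul_pos hpr).2 hαp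
  have k : β * α * (x - a) ^ 2 ≤ β * ((β + α) * (x - a) ^ 2) := by
    have : 0 ≤ β * β * (x - a) ^ 2 := by positivity
    nlinarith
  rw [h1, h2'] at k
  have hp : 1 < x * a := by nlinarith
  have k2 : (x * a - 1) * (x * a) ≤ (x * a + 1 ^ 2) ^ 2 := by nlinarith
  have k3 : β * (2 * (x + a) * (x * a - 1 ^ 2)) ≤ (x * a - 1) * (4 * a * β) := by
    have : 0 < (x * a - 1) * β := mul_pos (by linarith) hβp
    nlinarith
  have k4 : x * a ≤ 4 * a * β := by
    have : (x * a - 1) * (x * a) ≤ (x * a - 1) * (4 * a * β) := by linarith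
    exact le_of_mul_le_mul_left this (by linarith)
  have : x ≤ 4 * β := by
    apply le_of_mul_le_mul_left _ ha
    linarith
  linarith

theorem first_step {a β : ℚ} (h2 : 2 ≤ a) (h : β * (4 * (a * (a ^ 2 - 1))) = (a ^ 2 + 1) ^ 2) :
    β < a ∧ a / 4 ≤ β := by
  have h4 : 4 ≤ a ^ 2 := by nlinarith
  have hp : 0 < 4 * (a * (a ^ 2 - 1)) := by
    have : 0 < a ^ 2 - 1 := by linarith
    positivity
  constructor
  · apply lt_of_mul_lt_mul_right _ hp.le
    rw [h]
    nlinarith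
  · apply le_of_mul_le_mul_right _ hp
    rw [h]
    nlinarith

theorem desc {T : ℤ → ℚ} (hT : XSeq 1 T) {r : ℤ} (hr : r ≠ 0) (b : ℕ)
    (hA : 2 * 4 ^ b ≤ T r) (j : ℕ) (hj : j ≤ b) :
    T ((j + 2 : ℕ) * r) < T ((j + 1 : ℕ) * r) ∧ T ((j + 1 : ℕ) * r) ≤ T r ∧
    T r / 4 ^ (j + 1) ≤ T ((j + 2 : ℕ) * r) := by
  induction j with
  | zero =>
    have hd := hT.dbl r hr
    have h1 : (1 : ℚ) ≤ 4 ^ b := one_le_pow₀ (by norm_num)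
    have := first_step (a := T r) (by linarith) (by simpa using hd)
    simpa using this
  | succ j ih =>
    obtain ⟨i1, i2, i3⟩ := ih (by omega)
    have e0 : ((j + 2 : ℕ) : ℤ) * r ≠ 0 := mul_ne_zero (by positivity) hr
    have e2 : ((j + 2 : ℕ) : ℤ) * r ≠ r := by
      intro h
      have := mul_right_cancel₀ hr (h.trans (one_mul r).symm)
      omega
    have e3 : ((j + 2 : ℕ) : ℤ) * r ≠ -r := by
      intro h
      have := mul_right_cancel₀ hr (h.trans (neg_one_mul r).symm)
      omega
    have hsp := hT.sp _ _ e0 hr e2 e3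
    rw [show ((j + 2 : ℕ) : ℤ) * r + r = (j + 1 + 2 : ℕ) * r by push_cast; ring,
      show ((j + 2 : ℕ) : ℤ) * r - r = (j + 1 : ℕ) * r by push_cast; ring] at hsp
    have hsp' : SP 1 (T ((j + 2 : ℕ) * r)) (T r) (T ((j + 1 + 2 : ℕ) * r)) (T ((j + 1 : ℕ) * r)) := by
      rw [Nat.cast_one] at hsp
      exact hsp
    have hbig : 2 ≤ T r / 4 ^ (j + 1) := by
      rw [le_div_iff₀ (by positivity)]
      have : (4 : ℚ) ^ (j + 1) ≤ 4 ^ b := pow_le_pow_right₀ (by norm_num) hj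
      linarith
    obtain ⟨o1, o2⟩ := one_step (hbig.trans i3) (lt_of_lt_of_le i1 i2) i1 hsp'
    refine ⟨o1, (i1.le.trans i2), ?_⟩
    have : T r / 4 ^ (j + 1 + 1) = T r / 4 ^ (j + 1) / 4 := by rw [pow_succ, div_div]
    rw [this]
    linarith

set_option maxHeartbeats 1000000 in
theorem no_composite {T : ℤ → ℚ} (hT : XSeq 1 T) (a b : ℕ) (hb : 3 ≤ b) (hab : b ≤ a)
    (h1 : (T a).den ≤ (T 1).den) (h2 : (T (a * b : ℕ)).den ≤ (T 1).den) : False := by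
  have hp1 := hT.pos 1 one_ne_zero
  have hpa := hT.pos a (by omega)
  simp only [Nat.cast_one, one_pow] at hp1 hpa
  have hH5 := Ht_five hp1
  have hY5 := Ht_five hpa
  have g1 := ht_pow hT 1 a le_rfl (by omega)
  have g2 := ht_pow hT a b (by omega) (by omega)
  rw [one_mul, Nat.cast_one] at g1
  have c1 := Ht_ge (T 1)
  have c2 := Ht_ge (T a)
  have c3 := Ht_le (T a)
  have c4 := Ht_le (T (a * b : ℕ))
  set H := Ht (T 1) with hH
  set Y := Ht (T a) with hY
  have w1H : ((T 1).den : ℝ) ^ 2 ≤ 2 * H := by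
    have : (H0 (T 1) : ℝ) = (T 1).num ^ 2 + (T 1).den ^ 2 := by simp [H0]
    nlinarith [sq_nonneg ((T 1).num : ℝ)]
  have hHa : H ≤ H ^ (a ^ 2) := le_self_pow₀ (by linarith)
    (pow_ne_zero 2 (by omega : a ≠ 0))
  have H0a : (H0 (T a) : ℝ) = (T a).num ^ 2 + (T a).den ^ 2 := by simp [H0]
  have H0n : (H0 (T (a * b : ℕ)) : ℝ) = (T (a * b : ℕ)).num ^ 2 + (T (a * b : ℕ)).den ^ 2 := by
    simp [H0]
  have wa : ((T a).den : ℝ) ^ 2 ≤ (T 1).den ^ 2 := by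
    have : ((T a).den : ℝ) ≤ (T 1).den := by exact_mod_cast h1
    gcongr
  have wn : ((T (a * b : ℕ)).den : ℝ) ^ 2 ≤ (T 1).den ^ 2 := by
    have : ((T (a * b : ℕ)).den : ℝ) ≤ (T 1).den := by exact_mod_cast h2
    gcongr
  -- the point `aP` is close to the origin
  have big : (2 * 4 ^ b) ^ 2 * ((T a).den : ℝ) ^ 2 ≤ ((T a).num : ℝ) ^ 2 := by
    have e1 : a ^ 2 = 1 + (2 * (b + 1)) + (a ^ 2 - 1 - 2 * (b + 1)) := by
      have : 1 + 2 * (b + 1) ≤ a ^ 2 := by nlinarith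
      omega
    have e2 : H * (25 * 16 ^ b) ≤ H ^ (a ^ 2) := by
      rw [e1, pow_add, pow_add, pow_one, pow_mul]
      have q1 : (1 : ℝ) ≤ H ^ (a ^ 2 - 1 - 2 * (b + 1)) := one_le_pow₀ (by linarith)
      have q2 : (25 : ℝ) * 16 ^ b ≤ (H ^ 2) ^ (b + 1) := by
        have : (25 : ℝ) ≤ H ^ 2 := by nlinarith
        calc (25 : ℝ) * 16 ^ b ≤ 25 * 25 ^ b := by gcongr; norm_num
          _ = 25 ^ (b + 1) := by ring
          _ ≤ _ := by gcongr
      have q3 : H * (25 * 16 ^ b) ≤ H * (H ^ 2) ^ (b + 1) := by gcongr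
      have q4 : 0 ≤ H * (H ^ 2) ^ (b + 1) := by positivity
      nlinarith
    have e3 : ((2 : ℝ) * 4 ^ b) ^ 2 = 4 * 16 ^ b := by
      rw [mul_pow, ← pow_mul, mul_comm b 2, pow_mul]; norm_num
    rw [e3]
    have e4 : (1 : ℝ) ≤ 16 ^ b := one_le_pow₀ (by norm_num)
    have e5 : ((T a).den : ℝ) ^ 2 ≤ 2 * H := wa.trans w1H
    have e6 : 4 * 16 ^ b * ((T a).den : ℝ) ^ 2 ≤ 4 * 16 ^ b * (2 * H) := by gcongr
    have e7 : H ≤ H * 16 ^ b := by nlinarith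
    nlinarith
  have wapos : (0 : ℝ) < (T a).den := by exact_mod_cast (T a).den_pos
  have wnpos : (0 : ℝ) < (T (a * b : ℕ)).den := by exact_mod_cast (T (a * b : ℕ)).den_pos
  have bigQ : ((2 : ℚ) * 4 ^ b) ^ 2 ≤ T a ^ 2 := by
    have : (2 * 4 ^ b) ^ 2 * ((T a).den : ℚ) ^ 2 ≤ ((T a).num : ℚ) ^ 2 := by exact_mod_cast big
    have hd : (0 : ℚ) < (T a).den := by exact_mod_cast (T a).den_pos
    conv_rhs => rw [← Rat.num_div_den (T a)]
    rw [div_pow, le_div_iff₀ (by positivity)]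
    exact this
  have h4b : (1 : ℚ) ≤ 4 ^ b := one_le_pow₀ (by norm_num)
  have Tpos : 0 < T a := by
    have : 0 < T a ^ 2 - 1 := by nlinarith
    exact (pos_iff_pos_of_mul_pos hpa).2 this
  have hA : 2 * 4 ^ b ≤ T a := by
    apply le_of_sq_le_sq _ Tpos.le
    exact bigQ
  have D : ∀ j : ℕ, j + 2 ≤ b → T ((j + 2 : ℕ) * a) < T a ∧ 0 < T ((j + 2 : ℕ) * a) := by
    intro j hj
    obtain ⟨d1, d2, d3⟩ := desc hT (r := a) (by omega) b hA j (by omega)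
    refine ⟨lt_of_lt_of_le d1 d2, lt_of_lt_of_le ?_ d3⟩
    positivity
  obtain ⟨dl, dp⟩ := D (b - 2) (by omega)
  rw [Nat.sub_add_cancel (by omega), show (b : ℤ) * a = (a * b : ℕ) by push_cast; ring] at dl dp
  have nb : ((T (a * b : ℕ)).num : ℝ) ^ 2 ≤ (T a).num ^ 2 * (T 1).den ^ 2 := by
    have k1 : ((T (a * b : ℕ)).num : ℝ) = (T (a * b : ℕ) : ℝ) * (T (a * b : ℕ)).den := by
      exact_mod_cast (Rat.mul_den_eq_num (T (a * b : ℕ))).symm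
    have k2 : ((T a).num : ℝ) = (T a : ℝ) * (T a).den := by
      exact_mod_cast (Rat.mul_den_eq_num (T a)).symm
    have dl' : (T (a * b : ℕ) : ℝ) ≤ T a := by exact_mod_cast dl.le
    have dp' : (0 : ℝ) < T (a * b : ℕ) := by exact_mod_cast dp
    have wa1 : (1 : ℝ) ≤ (T a).den := by exact_mod_cast (T a).den_pos
    have k3 : (T a : ℝ) ≤ (T a).num := by rw [k2]; nlinarith
    rw [k1, mul_pow]
    gcongr
    exact dl'.trans k3
  have fin1 : (H0 (T (a * b : ℕ)) : ℝ) ≤ 2 * H * (2 * Y) := by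
    have wa1 : (1 : ℝ) ≤ (T a).den := by exact_mod_cast (T a).den_pos
    have : (H0 (T (a * b : ℕ)) : ℝ) ≤ (T 1).den ^ 2 * H0 (T a) := by
      rw [H0n, H0a]
      have : (1 : ℝ) ≤ (T a).den ^ 2 := one_le_pow₀ wa1
      nlinarith [sq_nonneg ((T 1).den : ℝ)]
    refine this.trans ?_
    have : (0 : ℝ) ≤ H0 (T a) := by rw [H0a]; positivity
    gcongr
    linarith
  have fin2 : Y ^ (b ^ 2) ≤ 16 * Y ^ 2 := by
    have s1 : H ≤ 2 * Y := hHa.trans g1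
    have s2 : H * Y ≤ 2 * Y * Y := mul_le_mul_of_nonneg_right s1 (by linarith)
    have s3 : Y ^ (b ^ 2) ≤ 2 * (2 * H * (2 * Y)) := by linarith
    have s4 : 2 * (2 * H * (2 * Y)) = 8 * (H * Y) := by ring
    have s5 : 16 * Y ^ 2 = 8 * (2 * Y * Y) := by ring
    linarith
  have fin3 : Y ^ 5 ≤ Y ^ (b ^ 2) := pow_le_pow_right₀ (by linarith) (by nlinarith)
  have fin4 : Y ^ 5 = Y ^ 2 * Y ^ 3 := by ring
  have fin5 : (5 : ℝ) ^ 3 ≤ Y ^ 3 := by gcongr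
  have : 0 < Y ^ 2 := by positivity
  nlinarith

theorem xseq_of {N : ℕ} (P : (congruentCurve N).Point) (h0 : ∀ m : ℤ, m ≠ 0 → m • P ≠ 0) :
    XSeq N (fun m : ℤ => xc (m • P)) := by
  have hne : ∀ m n : ℤ, m ≠ 0 → n ≠ 0 → m ≠ n → m ≠ -n → xc (m • P) ≠ xc (n • P) := by
    intro m n hm hn h h' e
    rcases xc_inj (h0 m hm) (h0 n hn) e with e | e
    · apply h0 (m - n) (sub_ne_zero.2 h)
      rw [sub_smul, e, sub_self]
    · apply h0 (m + n) (by omega)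
      rw [add_zsmul, e, neg_add_cancel]
  have hdd : ∀ m : ℤ, m ≠ 0 → m • P + m • P ≠ 0 := by
    intro m hm
    rw [← add_zsmul]
    exact h0 _ (by omega)
  refine ⟨?_, hne, ?_, ?_, ?_⟩
  · intro m
    simp only [neg_smul, xc_neg]
  · intro m n hm hn h h'
    have := xc_addsub (h0 m hm) (h0 n hn) (hne m n hm hn h h')
    rw [← add_zsmul, sub_eq_add_neg (m • P), ← sub_zsmul] at this
    exact this
  · intro m hm
    exact (xc_dbl (hdd m hm)).1
  · intro m hm
    have := (xc_dbl (hdd m hm)).2.1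
    rw [← add_zsmul, ← two_mul] at this
    exact this

theorem den_of_int {N : ℕ} {P : (congruentCurve N).Point} (h : IsIntegralPoint P) :
    (xc P).den = 1 := by
  obtain ⟨x, y, h, rfl, hx⟩ := h
  exact hx

theorem odd_case {N : ℕ} (hN : 0 < N) (hsq : Squarefree N) {X : ℤ → ℚ} (hX : XSeq N X)
    (a b : ℕ) (hb : 3 ≤ b) (hab : b ≤ a) (oa : Odd a) (ob : Odd b) (h1 : (X 1).den = 1)
    (h : (X (a * b : ℕ)).den = 1) : False := by
  have ha : (X a).den = 1 := by
    apply int_of_mul hX (m := (a : ℤ)) (by omega) b (by omega)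
    rw [show (b : ℤ) * a = (a * b : ℕ) by push_cast; ring]
    exact h
  have key : ∀ c : ℕ, 3 ≤ c → Odd c → (X c).den = 1 → (X c / N).den ≤ (X 1 / N).den := by
    intro c hc oc hd
    obtain ⟨k, rfl⟩ := oc
    have e : ((2 * k + 1 : ℕ) : ℤ) = 2 * (k : ℤ) + 1 := by push_cast; ring
    rw [e] at hd ⊢
    exact den_le hN hsq hX k (by omega) h1 hd
  exact no_composite (hX.scale hN) a b hb hab (key a (by omega) oa ha)
    (key (a * b) (by nlinarith) (oa.mul ob) h)

theorem stmt8 (N : ℕ) (hN : 0 < N) (hsq : Squarefree N)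
    (P : (congruentCurve N).Point)
    (hPint : IsIntegralPoint P)
    (hPtors : ∀ m : ℤ, 1 ≤ m → m • P ≠ 0)
    (n : ℤ) (hn : 2 ≤ n)
    (hint : IsIntegralPoint (n • P)) :
    Prime n := by
  have h0 : ∀ m : ℤ, m ≠ 0 → m • P ≠ 0 := by
    intro m hm h
    rcases lt_or_gt_of_ne hm with h' | h'
    · apply hPtors (-m) (by omega)
      rw [neg_smul, h, neg_zero]
    · exact hPtors m (by omega) h
  have hX := xseq_of P h0
  have hd := den_of_int hint
  rcases Int.even_or_odd n with ⟨m, hm⟩ | ho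
  · exfalso
    rw [hm, add_zsmul] at hd
    have hne : m • P + m • P ≠ 0 := by
      rw [← add_zsmul]
      exact h0 _ (by omega)
    obtain ⟨-, -, r, s, s', e1, e2, e3⟩ := xc_dbl hne
    exact no_even hsq hd e1 e2 e3
  · by_contra hnp
    obtain ⟨k, rfl⟩ := Int.eq_ofNat_of_zero_le (by omega : 0 ≤ n)
    have hkp : ¬ k.Prime := fun h => hnp (Nat.prime_iff_prime_int.1 h)
    have hko : Odd k := by exact_mod_cast ho
    obtain ⟨a, b, ha, hb, e⟩ : ∃ a b : ℕ, 2 ≤ a ∧ 2 ≤ b ∧ k = a * b := by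
      obtain ⟨a, ⟨b, e⟩, ha, hak⟩ := Nat.exists_dvd_of_not_prime2 (by omega) hkp
      refine ⟨a, b, ha, ?_, e⟩
      by_contra hb
      have : b = 0 ∨ b = 1 := by omega
      rcases this with rfl | rfl
      · omega
      · omega
    subst e
    obtain ⟨oa, ob⟩ := Nat.odd_mul.1 hko
    have ha3 : 3 ≤ a := by
      obtain ⟨c, hc⟩ := oa
      omega
    have hb3 : 3 ≤ b := by
      obtain ⟨c, hc⟩ := ob
      omega
    have h1 : (xc ((1 : ℤ) • P)).den = 1 := by
      rw [one_smul]
      exact den_of_int hPint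
    rcases le_total b a with hab | hab
    · exact odd_case hN hsq hX a b hb3 hab oa ob h1 hd
    · rw [mul_comm] at hd
      exact odd_case hN hsq hX b a ha3 hab ob oa h1 hd
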